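/- Let A and B be separated cocomplete V-categories and ξ a presheaf on A ⊗ B. The following are equivalent: (i) ξ is a G-ideal, i.e. ⨅_{a,b} [φ(a) ⊗ ψ(b), ξ(a,b)] = ξ(sup_A φ, sup_B ψ) for all φ ∈ DA and ψ ∈ DB; (ii) for all φ ∈ DA and ψ ∈ DB: ⨅_{a,b} [φ(a) ⊗ ψ(b), ξ(a,b)] ≤ ⨆_{a,b} A(sup_A φ, a) ⊗ B(sup_B ψ, b) ⊗ ξ(a,b). (Condition (ii) states that ξ lies in the inverter of the 2-cell D(y_A ⊗ y_B) ≤ D_∀(y_A ⊗ y_B); hence the tensor product A ⊗_V B is the coreflexive inverter of this 2-cell inside D(A ⊗ B).) -/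

import Mathlib

/-!
The supremum `⨆ a b, A(sup φ, a) ⊗ B(sup ψ, b) ⊗ ξ(a,b)` is `ξ(sup φ, sup ψ)` by the Yoneda lemma
for the presheaf `ξ` (`iSup_hom_mul_eq`), so condition (ii) is one half of the G-ideal equation.
The other half holds for every presheaf (`apply_sup_le_iInf_qhom`): the unit inequality
`φ(a) ≤ A(a, sup φ)` gives `ξ(sup φ, sup ψ) ⊗ φ(a) ⊗ ψ(b) ≤ ξ(a,b)`.
-/

/- `V` is a commutative quantale: a complete lattice with a commutative monoid
structure `(*, 1)` distributing over arbitrary suprema. -/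
variable {V : Type*} [CommMonoid V] [CompleteLattice V] [IsQuantale V]

/-- The internal hom `[v,w]` of the commutative quantale `V`. -/
def qhom (v w : V) : V := sSup {u | u * v ≤ w}

/-- A separated cocomplete `V`-category: a `V`-category whose underlying order is
antisymmetric, equipped with `sup : DA → A` satisfying
`A(sup φ, a) = ⨅ a', [φ(a'), A(a',a)]`. -/
structure SupCat (V : Type*) [CommMonoid V] [CompleteLattice V] [IsQuantale V] where
  carrier : Type*
  hom : carrier → carrier → V
  refl : ∀ x, 1 ≤ hom x x
  trans : ∀ x y z, hom x y * hom y z ≤ hom x z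
  separated : ∀ x y, 1 ≤ hom x y → 1 ≤ hom y x → x = y
  sup : {φ : carrier → V // ∀ x y, hom x y * φ y ≤ φ x} → carrier
  hom_sup : ∀ (φ : {φ : carrier → V // ∀ x y, hom x y * φ y ≤ φ x}) (a : carrier),
      hom (sup φ) a = ⨅ a', qhom (φ.1 a') (hom a' a)

/-- The set of contravariant presheaves on a separated cocomplete `V`-category. -/
abbrev PSh (A : SupCat V) := {φ : A.carrier → V // ∀ x y, A.hom x y * φ y ≤ φ x}

/-- A G-ideal on `A ⊗ B`: a presheaf `ξ` on the tensor product `V`-category `A ⊗ B`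
such that `⨅_{a,b} [φ(a) ⊗ ψ(b), ξ(a,b)] = ξ(sup_A φ, sup_B ψ)` for all presheaves
`φ` on `A` and `ψ` on `B`. -/
def IsGIdeal (A B : SupCat V) (ξ : A.carrier → B.carrier → V) : Prop :=
  (∀ a a' b b', A.hom a a' * B.hom b b' * ξ a' b' ≤ ξ a b) ∧
  (∀ (φ : PSh A) (ψ : PSh B),
      (⨅ a, ⨅ b, qhom (φ.1 a * ψ.1 b) (ξ a b)) = ξ (A.sup φ) (B.sup ψ))

/-- The adjunction `- ⊗ v ⊣ [v, -]`. -/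
theorem le_qhom_iff {u v w : V} : u ≤ qhom v w ↔ u * v ≤ w := by
  constructor
  · intro h
    calc u * v ≤ qhom v w * v := mul_le_mul_left h v
      _ ≤ w := by
        rw [qhom, IsQuantale.sSup_mul_distrib]
        exact iSup₂_le fun _ hx => hx
  · exact fun h => le_sSup h

/-- The unit inequality of `sup ⊣ y`: every presheaf lies below the representable of its supremum. -/
theorem SupCat.le_hom_sup (A : SupCat V) (φ : PSh A) (a : A.carrier) :
    φ.1 a ≤ A.hom a (A.sup φ) := by
  have h := A.refl (A.sup φ)
  rw [A.hom_sup] at h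
  simpa using le_qhom_iff.1 (h.trans (iInf_le _ a))

/-- The Yoneda lemma for a presheaf on `A ⊗ B`, in coend form. -/
theorem iSup_hom_mul_eq (A B : SupCat V) (ξ : A.carrier → B.carrier → V)
    (hξ : ∀ a a' b b', A.hom a a' * B.hom b b' * ξ a' b' ≤ ξ a b)
    (s : A.carrier) (t : B.carrier) :
    (⨆ a, ⨆ b, A.hom s a * B.hom t b * ξ a b) = ξ s t := by
  apply le_antisymm
  · exact iSup₂_le fun a b => hξ s a t b
  · refine le_iSup₂_of_le s t ?_
    calc ξ s t = 1 * 1 * ξ s t := by simp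
      _ ≤ A.hom s s * B.hom t t * ξ s t :=
        mul_le_mul_left (mul_le_mul' (A.refl s) (B.refl t)) _

theorem apply_sup_le_iInf_qhom (A B : SupCat V) (ξ : A.carrier → B.carrier → V)
    (hξ : ∀ a a' b b', A.hom a a' * B.hom b b' * ξ a' b' ≤ ξ a b)
    (φ : PSh A) (ψ : PSh B) :
    ξ (A.sup φ) (B.sup ψ) ≤ ⨅ a, ⨅ b, qhom (φ.1 a * ψ.1 b) (ξ a b) := by
  refine le_iInf₂ fun a b => le_qhom_iff.2 ?_
  rw [mul_comm]
  exact (mul_le_mul_left (mul_le_mul' (A.le_hom_sup φ a) (B.le_hom_sup ψ b)) _).trans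
    (hξ _ _ _ _)

/-- For a presheaf `ξ` on `A ⊗ B`, the G-ideal equation is equivalent to
`ξ` lying in the inverter of the 2-cell `D(y_A ⊗ y_B) ≤ D_∀(y_A ⊗ y_B)`. -/
theorem stmt3 (A B : SupCat V) (ξ : A.carrier → B.carrier → V)
    (hξ : ∀ a a' b b', A.hom a a' * B.hom b b' * ξ a' b' ≤ ξ a b) :
    (∀ (φ : PSh A) (ψ : PSh B),
        (⨅ a, ⨅ b, qhom (φ.1 a * ψ.1 b) (ξ a b)) = ξ (A.sup φ) (B.sup ψ))
    ↔ (∀ (φ : PSh A) (ψ : PSh B),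
        (⨅ a, ⨅ b, qhom (φ.1 a * ψ.1 b) (ξ a b))
          ≤ ⨆ a, ⨆ b, A.hom (A.sup φ) a * B.hom (B.sup ψ) b * ξ a b) := by
  simp only [iSup_hom_mul_eq A B ξ hξ]
  exact forall₂_congr fun φ ψ =>
    ⟨fun h => h.le, fun h => le_antisymm h (apply_sup_le_iInf_qhom A B ξ hξ φ ψ)⟩
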